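/- arXiv:1903.01121 — 5 statements merged into one kernel-verified Lean document; each statement's English description precedes it below -/
import Mathlib

section
/- Let A be a commutative Noetherian local ring with maximal ideal m, and let B be a commutative ring containing A as a subring that is finitely generated as an A-module. Write M = mB. Suppose there is an ideal b of A such that the image of b in B is an ideal of B (i.e., Bb ⊆ b) and the radical of b equals m. Suppose moreover that there exists n1 such that for all n ≥ n1, every f ∈ m^n satisfying f^j ∈ m^{nj+1} for some j ≥ 1 lies in m^{n+1} (no nonzero nilpotent classes in high-degree components of the associated graded ring, i.e. 'Proj G(A) is reduced'). Then there exists N such that for all n ≥ N the natural map ν_n : m^n/m^{n+1} → M^n/M^{n+1} is an isomorphism; explicitly, m^n ∩ M^{n+1} = m^{n+1} and m^n + M^{n+1} = M^n as A-submodules of B. -/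
/-!
If `m ^ k ≤ b`, then `M ^ (n + k) ⊆ m ^ n * (b B) = m ^ n * b ⊆ m ^ n` for every `n`, so high powers
of `M` lie in `A`. Let `f ∈ A ∩ M ^ (r + 1)`. Then `f ^ (k + 1)` lies in `M ^ ((r + 1) * (k + 1))`,
and `(r + 1) * (k + 1) = (r * (k + 1) + 1) + k`, hence `f ^ (k + 1) ∈ m ^ (r * (k + 1) + 1)`: in
each degree up to `r` the class of `f` in the associated graded ring is nilpotent. If there are no
nonzero nilpotents in high degrees, `f` climbs up to `m ^ (r + 1)`. Thus `M ^ n = m ^ n` for all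
large `n`, which is more than the bijectivity of `ν_n`.
-/

open IsLocalRing Submodule

section

variable {A B : Type*} [CommSemiring A] [CommSemiring B] [Algebra A B]

/-- The associated graded ring of `m` has no nonzero nilpotent in degree `n`, expressed through
representatives `f ∈ m ^ n` of the classes in `m ^ n / m ^ (n + 1)`. -/
def IsReducedInDegree (m : Ideal A) (n : ℕ) : Prop :=
  ∀ f ∈ m ^ n, (∃ j ≥ 1, f ^ j ∈ m ^ (n * j + 1)) → f ∈ m ^ (n + 1)

theorem mem_pow_succ_of_isReducedInDegree {m : Ideal A} {s : ℕ}
    (hred : ∀ i ≥ s, IsReducedInDegree m i) {f : A} (hf : f ∈ m ^ s) {j : ℕ} (hj : 1 ≤ j)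
    {r : ℕ} (hsr : s ≤ r) (hfj : f ^ j ∈ m ^ (r * j + 1)) : f ∈ m ^ (r + 1) := by
  induction r, hsr using Nat.le_induction with
  | base => exact hred s le_rfl f hf ⟨j, hj, hfj⟩
  | succ r hsr ih =>
    have hfj' : f ^ j ∈ m ^ (r * j + 1) := Ideal.pow_le_pow_right (by gcongr; omega) hfj
    exact hred (r + 1) (by omega) f (ih hfj') ⟨j, hj, hfj⟩

theorem restrictScalars_map_mul_le {b : Ideal A}
    (hb : (b.map (algebraMap A B)).restrictScalars A ≤ Submodule.map (Algebra.linearMap A B) b)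
    (I : Ideal A) :
    ((I * b).map (algebraMap A B)).restrictScalars A ≤
      Submodule.map (Algebra.linearMap A B) (I * b : Ideal A) := by
  rw [← Ideal.smul_top_eq_map] at hb ⊢
  calc (I * b) • (⊤ : Submodule A B) = I • b • ⊤ := Submodule.mul_smul I b ⊤
    _ ≤ I • Submodule.map (Algebra.linearMap A B) b := smul_mono_right I hb
    _ = Submodule.map (Algebra.linearMap A B) (I * b : Ideal A) :=
      (Submodule.map_smul'' I b (Algebra.linearMap A B)).symm

theorem restrictScalars_map_le_of_mul_mem {b : Ideal A}
    (hb : ∀ x : B, ∀ a ∈ b, x * algebraMap A B a ∈ Submodule.map (Algebra.linearMap A B) b) :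
    (b.map (algebraMap A B)).restrictScalars A ≤ Submodule.map (Algebra.linearMap A B) b := by
  rw [← Ideal.smul_top_eq_map, Submodule.smul_le]
  intro a ha x _
  rw [Algebra.smul_def, mul_comm]
  exact hb x a ha

theorem restrictScalars_map_pow_add_le {m b : Ideal A} {k : ℕ} (hk : m ^ k ≤ b)
    (hb : (b.map (algebraMap A B)).restrictScalars A ≤ Submodule.map (Algebra.linearMap A B) b)
    (n : ℕ) :
    ((m.map (algebraMap A B)) ^ (n + k)).restrictScalars A ≤
      Submodule.map (Algebra.linearMap A B) (m ^ n : Ideal A) := by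
  have hpow : m ^ (n + k) ≤ m ^ n * b := by
    rw [pow_add]
    exact Ideal.mul_mono_right hk
  calc ((m.map (algebraMap A B)) ^ (n + k)).restrictScalars A
      = ((m ^ (n + k)).map (algebraMap A B)).restrictScalars A := by rw [Ideal.map_pow]
    _ ≤ ((m ^ n * b).map (algebraMap A B)).restrictScalars A := Ideal.map_mono hpow
    _ ≤ Submodule.map (Algebra.linearMap A B) (m ^ n * b : Ideal A) :=
      restrictScalars_map_mul_le hb (m ^ n)
    _ ≤ Submodule.map (Algebra.linearMap A B) (m ^ n : Ideal A) :=
      Submodule.map_mono Ideal.mul_le_left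

theorem pow_succ_mem_of_algebraMap_mem (hinj : Function.Injective (algebraMap A B))
    {m : Ideal A} {k : ℕ}
    (hk : ∀ n, ((m.map (algebraMap A B)) ^ (n + k)).restrictScalars A ≤
      Submodule.map (Algebra.linearMap A B) (m ^ n : Ideal A))
    {r : ℕ} {f : A} (hf : algebraMap A B f ∈ (m.map (algebraMap A B)) ^ (r + 1)) :
    f ^ (k + 1) ∈ m ^ (r * (k + 1) + 1) := by
  have hpow : algebraMap A B (f ^ (k + 1)) ∈
      (m.map (algebraMap A B)) ^ (r * (k + 1) + 1 + k) := by
    have hexp : r * (k + 1) + 1 + k = (r + 1) * (k + 1) := by ring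
    rw [hexp, pow_mul, map_pow]
    exact Ideal.pow_mem_pow hf (k + 1)
  obtain ⟨a, ha, hfa⟩ := hk _ hpow
  exact hinj hfa ▸ ha

theorem map_pow_eq_restrictScalars_map_pow (hinj : Function.Injective (algebraMap A B))
    {m : Ideal A} {k s : ℕ}
    (hk : ∀ n, ((m.map (algebraMap A B)) ^ (n + k)).restrictScalars A ≤
      Submodule.map (Algebra.linearMap A B) (m ^ n : Ideal A))
    (hred : ∀ i ≥ s, IsReducedInDegree m i) {n : ℕ} (hn : s + k < n) :
    Submodule.map (Algebra.linearMap A B) (m ^ n : Ideal A) =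
      ((m.map (algebraMap A B)) ^ n).restrictScalars A := by
  apply le_antisymm
  · rw [← Ideal.map_pow, ← Ideal.smul_top_eq_map]
    exact Submodule.map_le_smul_top (m ^ n) (Algebra.linearMap A B)
  · intro x hx
    obtain ⟨f, hf, rfl⟩ := hk s (Ideal.pow_le_pow_right hn.le hx)
    obtain ⟨r, rfl⟩ := Nat.exists_eq_add_one_of_ne_zero (Nat.ne_zero_of_lt hn)
    have hfk : f ^ (k + 1) ∈ m ^ (r * (k + 1) + 1) := pow_succ_mem_of_algebraMap_mem hinj hk hx
    have hfr : f ∈ m ^ (r + 1) :=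
      mem_pow_succ_of_isReducedInDegree hred hf (Nat.le_add_left 1 k) (by omega) hfk
    exact Submodule.mem_map_of_mem hfr

theorem stmt0_general (hinj : Function.Injective (algebraMap A B)) {m b : Ideal A}
    (hb : ∀ x : B, ∀ a ∈ b, x * algebraMap A B a ∈ Submodule.map (Algebra.linearMap A B) b)
    {k s : ℕ} (hk : m ^ k ≤ b) (hred : ∀ i ≥ s, IsReducedInDegree m i)
    {n : ℕ} (hn : s + k < n) :
    Submodule.map (Algebra.linearMap A B) (m ^ n : Ideal A) ⊓
          ((m.map (algebraMap A B)) ^ (n + 1)).restrictScalars A =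
        Submodule.map (Algebra.linearMap A B) (m ^ (n + 1) : Ideal A) ∧
      Submodule.map (Algebra.linearMap A B) (m ^ n : Ideal A) ⊔
          ((m.map (algebraMap A B)) ^ (n + 1)).restrictScalars A =
        ((m.map (algebraMap A B)) ^ n).restrictScalars A := by
  have hmap {i : ℕ} (hi : s + k < i) := map_pow_eq_restrictScalars_map_pow hinj
    (restrictScalars_map_pow_add_le hk (restrictScalars_map_le_of_mul_mem hb)) hred hi
  have hle : ((m.map (algebraMap A B)) ^ (n + 1)).restrictScalars A ≤
      ((m.map (algebraMap A B)) ^ n).restrictScalars A := Ideal.pow_le_pow_right n.le_succ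
  rw [hmap hn, hmap (Nat.lt_succ_of_lt hn)]
  exact ⟨inf_eq_right.2 hle, sup_eq_left.2 hle⟩

end

/-- If `A` is a Noetherian local ring, `B ⊇ A` a finite ring extension,
`M = mB`, there is an ideal `b` of `A` whose image in `B` is an ideal of `B` with
`√b = m`, and the associated graded ring of `A` has no nonzero nilpotents in high
degrees, then `ν_n : m^n/m^{n+1} → M^n/M^{n+1}` is an isomorphism for `n >> 0`. -/
theorem stmt0 (A B : Type*) [CommRing A] [IsNoetherianRing A] [IsLocalRing A]
    [CommRing B] [Algebra A B]
    (hinj : Function.Injective (algebraMap A B)) [Module.Finite A B]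
    (b : Ideal A)
    (hb : ∀ x : B, ∀ a ∈ b, x * algebraMap A B a ∈
      Submodule.map (Algebra.linearMap A B) (b : Submodule A A))
    (hrad : b.radical = maximalIdeal A)
    (n1 : ℕ)
    (hred : ∀ n ≥ n1, ∀ f ∈ maximalIdeal A ^ n,
      (∃ j ≥ 1, f ^ j ∈ maximalIdeal A ^ (n * j + 1)) → f ∈ maximalIdeal A ^ (n + 1)) :
    ∃ N : ℕ, ∀ n ≥ N,
      Submodule.map (Algebra.linearMap A B) (maximalIdeal A ^ n : Ideal A) ⊓
          ((((maximalIdeal A).map (algebraMap A B)) ^ (n + 1)).restrictScalars A) =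
        Submodule.map (Algebra.linearMap A B) (maximalIdeal A ^ (n + 1) : Ideal A) ∧
      Submodule.map (Algebra.linearMap A B) (maximalIdeal A ^ n : Ideal A) ⊔
          ((((maximalIdeal A).map (algebraMap A B)) ^ (n + 1)).restrictScalars A) =
        (((maximalIdeal A).map (algebraMap A B)) ^ n).restrictScalars A := by
  obtain ⟨k, hk⟩ := b.exists_radical_pow_le_of_fg (IsNoetherian.noetherian _)
  exact ⟨n1 + k + 1, fun n hn => stmt0_general hinj hb (hrad ▸ hk) hred hn⟩
end

section
/- Let A be a commutative Noetherian local ring with maximal ideal m, and let B be a commutative ring containing A as a subring that is finitely generated as an A-module. Write M = mB. Suppose there is an ideal b of A such that the image of b in B is an ideal of B (Bb ⊆ b) and the radical of b equals m, and suppose there exists n1 such that for all n ≥ n1, every f ∈ m^n satisfying f^j ∈ m^{nj+1} for some j ≥ 1 lies in m^{n+1}. Then there exists N such that for all n ≥ N one has m^n = M^n; that is, the image of m^n in B equals the ideal (mB)^n. -/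
open IsLocalRing Submodule

/-
Let `m ^ c ⊆ b`. Since the image of `b` is an ideal of `B`, so is the image of `m ^ n * b`, whence
`M ^ (n + c)` is contained in the image of `m ^ n`. A power `y ^ j` of an element of `M ^ (n + 1)`
lies in `M ^ (n * j + j)`, and for `j = c + 1` this is `M ^ (n * j + 1 + c)`: the loss of `c`
does not grow with the exponent. So if `y` is the image of `f`, then `f ^ j ∈ m ^ (n * j + 1)`,
and the absence of nilpotents in high degrees of `G(A)` raises the order of `f` up to `n + 1`.
-/

section HasIdealImage

variable {A : Type*} (B : Type*) [CommSemiring A] [CommSemiring B] [Algebra A B]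

/-- The image of the ideal `b` of `A` in the `A`-algebra `B` is an ideal of `B`, expressed by saying
that it is already the extended ideal `bB`. -/
def HasIdealImage (b : Ideal A) : Prop :=
  Submodule.map (Algebra.linearMap A B) b = (b.map (algebraMap A B)).restrictScalars A

variable {B}

theorem hasIdealImage_iff_le {b : Ideal A} :
    HasIdealImage B b ↔
      (b.map (algebraMap A B)).restrictScalars A ≤ Submodule.map (Algebra.linearMap A B) b := by
  refine ⟨fun h => h.ge, fun h => le_antisymm ?_ h⟩
  rintro _ ⟨a, ha, rfl⟩
  exact Ideal.mem_map_of_mem (algebraMap A B) ha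

theorem hasIdealImage_iff_mul_mem {b : Ideal A} :
    HasIdealImage B b ↔
      ∀ x : B, ∀ a ∈ b, x * algebraMap A B a ∈ Submodule.map (Algebra.linearMap A B) b := by
  refine ⟨fun h x a ha => h.ge (Ideal.mul_mem_left _ x (Ideal.mem_map_of_mem _ ha)), fun h => ?_⟩
  rw [hasIdealImage_iff_le, ← Ideal.smul_top_eq_map, Submodule.smul_le]
  intro a ha x _
  rw [Algebra.smul_def, mul_comm]
  exact h x a ha

namespace HasIdealImage

variable {b : Ideal A}

theorem mul_left (hb : HasIdealImage B b) (I : Ideal A) : HasIdealImage B (I * b) :=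
  calc Submodule.map (Algebra.linearMap A B) (I * b)
    _ = I • Submodule.map (Algebra.linearMap A B) b := Submodule.map_smul'' I b _
    _ = I • b • (⊤ : Submodule A B) := by rw [hb, Ideal.smul_top_eq_map]
    _ = (I * b) • (⊤ : Submodule A B) := (Submodule.mul_smul I b ⊤).symm
    _ = ((I * b).map (algebraMap A B)).restrictScalars A := Ideal.smul_top_eq_map _

theorem exists_mem_pow_algebraMap_eq (hb : HasIdealImage B b) {I : Ideal A} {c : ℕ}
    (hc : I ^ c ≤ b) {n : ℕ} {y : B} (hy : y ∈ I.map (algebraMap A B) ^ (n + c)) :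
    ∃ f ∈ I ^ n, algebraMap A B f = y := by
  have hle : I ^ (n + c) ≤ I ^ n * b := pow_add I n c ▸ Ideal.mul_mono_right hc
  rw [← Ideal.map_pow] at hy
  obtain ⟨f, hf, hfy⟩ := (hb.mul_left (I ^ n)).ge (Ideal.map_mono hle hy)
  exact ⟨f, Ideal.mul_le_left hf, hfy⟩

end HasIdealImage

end HasIdealImage

section IsAssocGradedReducedFrom

variable {A : Type*} [CommSemiring A]

/-- The associated graded ring `⨁ I ^ n / I ^ (n + 1)` has no nonzero nilpotent homogeneous element
of degree at least `n₀`, expressed through representatives in `A`. -/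
def IsAssocGradedReducedFrom (I : Ideal A) (n₀ : ℕ) : Prop :=
  ∀ n ≥ n₀, ∀ f ∈ I ^ n, (∃ j ≥ 1, f ^ j ∈ I ^ (n * j + 1)) → f ∈ I ^ (n + 1)

theorem IsAssocGradedReducedFrom.mem_pow_succ_of_pow_mem {I : Ideal A} {n₀ n j : ℕ} {f : A}
    (hI : IsAssocGradedReducedFrom I n₀) (hf : f ∈ I ^ n₀) (hn : n₀ ≤ n) (hj : 1 ≤ j)
    (hfj : f ^ j ∈ I ^ (n * j + 1)) : f ∈ I ^ (n + 1) := by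
  induction n, hn using Nat.le_induction with
  | base => exact hI n₀ le_rfl f hf ⟨j, hj, hfj⟩
  | succ n hn ih =>
    have hfj' : f ^ j ∈ I ^ (n * j + 1) := Ideal.pow_le_pow_right (by gcongr; omega) hfj
    exact hI (n + 1) (by omega) f (ih hfj') ⟨j, hj, hfj⟩

end IsAssocGradedReducedFrom

theorem stmt1_general {A B : Type*} [CommSemiring A] [CommSemiring B] [Algebra A B]
    (hinj : Function.Injective (algebraMap A B)) {b I : Ideal A} (hb : HasIdealImage B b)
    {c n₀ : ℕ} (hc : I ^ c ≤ b) (hI : IsAssocGradedReducedFrom I n₀) {n : ℕ} (hn : n₀ + c ≤ n) :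
    HasIdealImage B (I ^ (n + 1)) := by
  rw [hasIdealImage_iff_le, Ideal.map_pow]
  intro y (hy : y ∈ I.map (algebraMap A B) ^ (n + 1))
  obtain ⟨f, hf, rfl⟩ : ∃ f ∈ I ^ n₀, algebraMap A B f = y :=
    hb.exists_mem_pow_algebraMap_eq hc (Ideal.pow_le_pow_right (by omega) hy)
  have hpow : algebraMap A B (f ^ (c + 1)) ∈ I.map (algebraMap A B) ^ (n * (c + 1) + 1 + c) := by
    have hexp : n * (c + 1) + 1 + c = (n + 1) * (c + 1) := by ring
    rw [map_pow, hexp, pow_mul]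
    exact Ideal.pow_mem_pow hy (c + 1)
  obtain ⟨g, hg, hgf⟩ := hb.exists_mem_pow_algebraMap_eq hc hpow
  have hfc : f ^ (c + 1) ∈ I ^ (n * (c + 1) + 1) := hinj hgf ▸ hg
  exact ⟨f, hI.mem_pow_succ_of_pow_mem hf (by omega) (by omega) hfc, rfl⟩

/-- Under the same hypotheses as Statement 0 (Noetherian local `A`,
finite extension `B`, conductor-like ideal `b` with `√b = m`, no nonzero nilpotents
in high degrees of `G(A)`), one has `m^n = M^n` (image of `m^n` in `B` equals
`(mB)^n`) for `n >> 0`. -/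
theorem stmt1 (A B : Type*) [CommRing A] [IsNoetherianRing A] [IsLocalRing A]
    [CommRing B] [Algebra A B]
    (hinj : Function.Injective (algebraMap A B)) [Module.Finite A B]
    (b : Ideal A)
    (hb : ∀ x : B, ∀ a ∈ b, x * algebraMap A B a ∈
      Submodule.map (Algebra.linearMap A B) (b : Submodule A A))
    (hrad : b.radical = maximalIdeal A)
    (n1 : ℕ)
    (hred : ∀ n ≥ n1, ∀ f ∈ maximalIdeal A ^ n,
      (∃ j ≥ 1, f ^ j ∈ maximalIdeal A ^ (n * j + 1)) → f ∈ maximalIdeal A ^ (n + 1)) :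
    ∃ N : ℕ, ∀ n ≥ N,
      Submodule.map (Algebra.linearMap A B) (maximalIdeal A ^ n : Ideal A) =
        (((maximalIdeal A).map (algebraMap A B)) ^ n).restrictScalars A := by
  obtain ⟨c, hc⟩ := b.exists_radical_pow_le_of_fg (IsNoetherian.noetherian _)
  refine ⟨n1 + c + 1, fun n hn => ?_⟩
  obtain ⟨k, rfl⟩ := Nat.exists_eq_add_of_le' (show 1 ≤ n by omega)
  rw [← Ideal.map_pow]
  exact stmt1_general hinj (hasIdealImage_iff_mul_mem.mpr hb) (hrad ▸ hc) hred (by omega)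
end

section
/- Let A be a commutative local ring with maximal ideal m, and let B be a commutative ring containing A as a subring. Write M = mB, and suppose n0 ≥ 1 is such that M^{n0} is contained in the image of m in B. Then for every n ≥ 0 and every f ∈ m^n whose image in B lies in M^{n+1}, one has f^{n0} ∈ m^{n·n0 + 1}. In particular, the class of f in the degree-n component m^n/m^{n+1} of the associated graded ring G(A) is nilpotent. -/
open IsLocalRing Submodule

section RestrictScalars

variable {A B : Type*} [CommSemiring A] [CommSemiring B] [Algebra A B]

theorem restrictScalars_map_smul_le_map_smul {P Q : Type*} [AddCommMonoid P] [Module A P]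
    [AddCommMonoid Q] [Module A Q] [Module B Q] [IsScalarTower A B Q]
    {g : P →ₗ[A] Q} {L : Submodule A P} {N : Submodule B Q}
    (h : N.restrictScalars A ≤ L.map g) (J : Ideal A) :
    (J.map (algebraMap A B) • N).restrictScalars A ≤ (J • L).map g :=
  calc (J.map (algebraMap A B) • N).restrictScalars A
      = J • N.restrictScalars A := Ideal.smul_restrictScalars J N
    _ ≤ J • L.map g := smul_mono_right J h
    _ = (J • L).map g := (Submodule.map_smul'' J L g).symm

theorem restrictScalars_map_pow_add_le_map_linearMap_pow_succ {I : Ideal A} {n₀ : ℕ}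
    (h : ((I.map (algebraMap A B)) ^ n₀).restrictScalars A ≤
      Submodule.map (Algebra.linearMap A B) I) (k : ℕ) :
    ((I.map (algebraMap A B)) ^ (k + n₀)).restrictScalars A ≤
      Submodule.map (Algebra.linearMap A B) (I ^ (k + 1)) := by
  rw [pow_add, pow_succ, ← Ideal.map_pow]
  exact restrictScalars_map_smul_le_map_smul h (I ^ k)

end RestrictScalars

theorem stmt4_general {A B : Type*} [CommSemiring A] [CommSemiring B] [Algebra A B]
    (hinj : Function.Injective (algebraMap A B)) {I : Ideal A} {n₀ : ℕ}
    (h : ((I.map (algebraMap A B)) ^ n₀).restrictScalars A ≤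
      Submodule.map (Algebra.linearMap A B) I)
    {n : ℕ} {f : A} (hf : algebraMap A B f ∈ (I.map (algebraMap A B)) ^ (n + 1)) :
    f ^ n₀ ∈ I ^ (n * n₀ + 1) := by
  have hpow : algebraMap A B (f ^ n₀) ∈ (I.map (algebraMap A B)) ^ (n * n₀ + n₀) := by
    rw [map_pow, ← Nat.succ_mul, pow_mul]
    exact Ideal.pow_mem_pow hf n₀
  obtain ⟨a, ha, haf⟩ := restrictScalars_map_pow_add_le_map_linearMap_pow_succ h (n * n₀) hpow
  rwa [← hinj haf]

/-- `A` local, `B ⊇ A`, `M = mB`, and `n0 ≥ 1` with `M^{n0}` contained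
in the image of `m` in `B`. Then for every `n` and every `f ∈ m^n` whose image in
`B` lies in `M^{n+1}`, one has `f^{n0} ∈ m^{n·n0+1}`; in particular the class of
`f` in the degree-`n` component of `G(A)` is nilpotent. -/
theorem stmt4 (A B : Type*) [CommRing A] [IsLocalRing A]
    [CommRing B] [Algebra A B]
    (hinj : Function.Injective (algebraMap A B))
    (n0 : ℕ) (hn0 : 1 ≤ n0)
    (h : (((maximalIdeal A).map (algebraMap A B)) ^ n0).restrictScalars A ≤
      Submodule.map (Algebra.linearMap A B) (maximalIdeal A : Submodule A A)) :
    ∀ n : ℕ, ∀ f ∈ maximalIdeal A ^ n,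
      algebraMap A B f ∈ ((maximalIdeal A).map (algebraMap A B)) ^ (n + 1) →
        f ^ n0 ∈ maximalIdeal A ^ (n * n0 + 1) ∧
          ∃ j ≥ 1, f ^ j ∈ maximalIdeal A ^ (n * j + 1) := by
  intro n f _ hf
  have hpow := stmt4_general hinj h hf
  exact ⟨hpow, n0, hn0, hpow⟩
end

section
/- Let A be a commutative Noetherian local ring with maximal ideal m and residue field k = A/m, and let B be a commutative ring containing A as a subring that is finitely generated as an A-module. Write M = mB, and suppose n0 ≥ 1 is such that M^{n0} is contained in the image of m in B. Then for every n ≥ n0, the length of the A-module M^{n0}/M^n is at most the length of the A-module m/m^n; equivalently, ∑_{i=n0}^{n-1} dim_k(M^i/M^{i+1}) ≤ ∑_{i=1}^{n-1} dim_k(m^i/m^{i+1}). -/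
open IsLocalRing Submodule

/-! Put `M = mB`. The structure map sends `m ^ n` into `M ^ n`, and the image of `m` contains
`M ^ n0`; hence `M ^ n0 / M ^ n` is a subquotient of `m / m ^ n`. Each graded piece of the two
filtrations is a vector space over `A / m`, so additivity of length turns the sums of dimensions
into the lengths of these quotients. -/

section RelLength

variable {R E F : Type*} [Ring R] [AddCommGroup E] [Module R E] [AddCommGroup F] [Module R F]

/-- The length of `Q / (P ⊓ Q)`, which is the length of `Q / P` when `P ≤ Q`. As for
`Subgroup.relIndex`, the submodule that is divided out comes first and need not lie in the second
one. -/
noncomputable def relLength (P Q : Submodule R E) : ℕ∞ :=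
  Module.length R (Q ⧸ P.submoduleOf Q)

theorem relLength_self (P : Submodule R E) : relLength P P = 0 := by
  rw [relLength, submoduleOf_self]
  exact Module.length_eq_zero

theorem mapQ_inclusion_injective (P : Submodule R E) {Q S : Submodule R E} (h : Q ≤ S) :
    Function.Injective
      (mapQ (P.submoduleOf Q) (P.submoduleOf S) (inclusion h) fun _ hx ↦ hx) :=
  LinearMap.ker_eq_bot.mp ((ker_mapQ ..).trans (mkQ_map_self _))

theorem relLength_add_relLength {P Q S : Submodule R E} (hPQ : P ≤ Q) (hQS : Q ≤ S) :
    relLength P Q + relLength Q S = relLength P S := by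
  let f : (Q ⧸ P.submoduleOf Q) →ₗ[R] S ⧸ P.submoduleOf S :=
    mapQ _ _ (inclusion hQS) fun _ hx ↦ hx
  let g : (S ⧸ P.submoduleOf S) →ₗ[R] S ⧸ Q.submoduleOf S := factor fun _ hx ↦ hPQ hx
  have hfg : Function.Exact f g := by
    rw [LinearMap.exact_iff]
    calc
      LinearMap.ker g = (Q.submoduleOf S).map (P.submoduleOf S).mkQ := ker_mapQ ..
      _ = (LinearMap.range (inclusion hQS)).map (P.submoduleOf S).mkQ :=
        congrArg (map _) (range_inclusion Q S hQS).symm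
      _ = LinearMap.range f := (range_mapQ ..).symm
  exact (Module.length_eq_add_of_exact f g (mapQ_inclusion_injective P hQS)
    (factor_surjective _) hfg).symm

theorem relLength_anti_left {P P' : Submodule R E} (h : P ≤ P') (Q : Submodule R E) :
    relLength P' Q ≤ relLength P Q :=
  Module.length_le_of_surjective _ (factor_surjective (comap_mono h))

theorem relLength_mono_right (P : Submodule R E) {Q Q' : Submodule R E} (h : Q ≤ Q') :
    relLength P Q ≤ relLength P Q' :=
  Module.length_le_of_injective _ (mapQ_inclusion_injective P h)

theorem relLength_map_le (f : E →ₗ[R] F) (P Q : Submodule R E) :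
    relLength (P.map f) (Q.map f) ≤ relLength P Q :=
  Module.length_le_of_surjective
    (mapQ (P.submoduleOf Q) ((P.map f).submoduleOf (Q.map f)) (f.submoduleMap Q)
      fun _ hx ↦ mem_map_of_mem (f := f) hx)
    (.of_comp (g := (P.submoduleOf Q).mkQ)
      ((mkQ_surjective _).comp (f.submoduleMap_surjective Q)))

theorem relLength_le_of_map_le_of_le_map (f : E →ₗ[R] F) {P Q : Submodule R E}
    {P' Q' : Submodule R F} (hP : P.map f ≤ P') (hQ : Q' ≤ Q.map f) :
    relLength P' Q' ≤ relLength P Q :=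
  calc
    relLength P' Q' ≤ relLength (P.map f) Q' := relLength_anti_left hP Q'
    _ ≤ relLength (P.map f) (Q.map f) := relLength_mono_right _ hQ
    _ ≤ relLength P Q := relLength_map_le f P Q

theorem sum_relLength_succ {Q : ℕ → Submodule R E} (hQ : Antitone Q) {a b : ℕ} (hab : a ≤ b) :
    ∑ i ∈ Finset.Ico a b, relLength (Q (i + 1)) (Q i) = relLength (Q b) (Q a) := by
  induction b, hab using Nat.le_induction with
  | base => rw [Finset.Ico_self, Finset.sum_empty, relLength_self]
  | succ b hab ih =>
    rw [Finset.sum_Ico_succ_top hab, ih, add_comm,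
      relLength_add_relLength (hQ b.le_succ) (hQ hab)]

end RelLength

theorem smul_top_eq_submoduleOf {A E : Type*} [Semiring A] [AddCommMonoid E] [Module A E]
    (I : Ideal A) (Q : Submodule A E) :
    I • (⊤ : Submodule A Q) = (I • Q).submoduleOf Q := by
  apply map_injective_of_injective Q.subtype_injective
  rw [map_smul'', map_subtype_top, submoduleOf, map_comap_subtype, inf_eq_right.mpr smul_le_right]

section GradedPieces

variable {A E F : Type*} [CommRing A] [AddCommGroup E] [Module A E] [AddCommGroup F] [Module A F]

theorem relLength_smul_self (I : Ideal A) (Q : Submodule A E) :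
    relLength (I • Q) Q = Module.length (A ⧸ I) (Q ⧸ I • (⊤ : Submodule A Q)) := by
  rw [relLength, ← smul_top_eq_submoduleOf]
  exact Module.length_eq_of_surjective Ideal.Quotient.mk_surjective

theorem finrank_quotient_smul_top_le_relLength (m : Ideal A) [m.IsMaximal] (Q : Submodule A E) :
    (Module.finrank (A ⧸ m) (Q ⧸ m • (⊤ : Submodule A Q)) : ℕ∞) ≤ relLength (m • Q) Q := by
  let := Ideal.Quotient.field m
  rw [relLength_smul_self, Module.length_eq_rank]
  -- In infinite dimension `finrank` is `0` while the length is `⊤`.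
  exact ENat.natCast_toNat_le_self _

theorem finrank_quotient_smul_top_eq_relLength (m : Ideal A) [m.IsMaximal] {Q : Submodule A E}
    (hQ : Q.FG) :
    (Module.finrank (A ⧸ m) (Q ⧸ m • (⊤ : Submodule A Q)) : ℕ∞) = relLength (m • Q) Q := by
  let := Ideal.Quotient.field m
  have : Module.Finite A Q := .of_fg hQ
  have : Module.Finite (A ⧸ m) (Q ⧸ m • (⊤ : Submodule A Q)) := .of_restrictScalars_finite A _ _
  rw [relLength_smul_self]
  exact (Module.length_eq_finrank _ _).symm

theorem sum_finrank_le_sum_finrank {m : Ideal A} [m.IsMaximal] (f : E →ₗ[A] F)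
    {P : ℕ → Submodule A E} {Q : ℕ → Submodule A F}
    (hP : ∀ i, P (i + 1) = m • P i) (hQ : ∀ i, Q (i + 1) = m • Q i) (hfg : ∀ i, (P i).FG)
    {a b n : ℕ} (han : a ≤ n) (hbn : b ≤ n) (hn : (P n).map f ≤ Q n) (hab : Q b ≤ (P a).map f) :
    ∑ i ∈ Finset.Ico b n, Module.finrank (A ⧸ m) (Q i ⧸ m • (⊤ : Submodule A (Q i))) ≤
      ∑ i ∈ Finset.Ico a n, Module.finrank (A ⧸ m) (P i ⧸ m • (⊤ : Submodule A (P i))) := by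
  have hP' : Antitone P := antitone_nat_of_succ_le fun i ↦ (hP i).trans_le smul_le_right
  have hQ' : Antitone Q := antitone_nat_of_succ_le fun i ↦ (hQ i).trans_le smul_le_right
  rw [← Nat.cast_le (α := ℕ∞), Nat.cast_sum, Nat.cast_sum]
  calc
    _ ≤ ∑ i ∈ Finset.Ico b n, relLength (Q (i + 1)) (Q i) :=
      Finset.sum_le_sum fun i _ ↦ hQ i ▸ finrank_quotient_smul_top_le_relLength m (Q i)
    _ = relLength (Q n) (Q b) := sum_relLength_succ hQ' hbn
    _ ≤ relLength (P n) (P a) := relLength_le_of_map_le_of_le_map f hn hab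
    _ = ∑ i ∈ Finset.Ico a n, relLength (P (i + 1)) (P i) := (sum_relLength_succ hP' han).symm
    _ = _ := Finset.sum_congr rfl fun i _ ↦
      hP i ▸ (finrank_quotient_smul_top_eq_relLength m (hfg i)).symm

end GradedPieces

theorem map_linearMap_le_restrictScalars_map {A B : Type*} [CommSemiring A] [Semiring B]
    [Algebra A B] (I : Ideal A) :
    Submodule.map (Algebra.linearMap A B) I ≤ (I.map (algebraMap A B)).restrictScalars A :=
  map_le_iff_le_comap.mpr fun _ hx ↦ Ideal.mem_map_of_mem _ hx

theorem stmt7_general {A B : Type*} [CommRing A] [CommRing B] [Algebra A B] (m : Ideal A)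
    [m.IsMaximal] (hm : m.FG) (n0 n : ℕ)
    (h : ((m.map (algebraMap A B)) ^ n0).restrictScalars A ≤
      Submodule.map (Algebra.linearMap A B) m) :
    ∑ i ∈ Finset.Ico n0 n,
        Module.finrank (A ⧸ m)
          ((((m.map (algebraMap A B)) ^ i).restrictScalars A) ⧸
            (m • (⊤ : Submodule A (((m.map (algebraMap A B)) ^ i).restrictScalars A)))) ≤
      ∑ i ∈ Finset.Ico 1 n,
        Module.finrank (A ⧸ m)
          ((m ^ i : Ideal A) ⧸ (m • (⊤ : Submodule A (m ^ i : Ideal A)))) := by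
  obtain hn | hn := le_or_gt n n0
  · rw [Finset.Ico_eq_empty_of_le hn, Finset.sum_empty]
    exact Nat.zero_le _
  have succ_eq (i : ℕ) : (m.map (algebraMap A B) ^ (i + 1)).restrictScalars A =
      m • (m.map (algebraMap A B) ^ i).restrictScalars A := by
    rw [pow_succ', ← smul_eq_mul, Ideal.smul_restrictScalars]
  refine sum_finrank_le_sum_finrank (P := fun i ↦ m ^ i) (Algebra.linearMap A B)
    (fun i ↦ pow_succ' m i) succ_eq (fun _ ↦ hm.pow) (Nat.one_le_of_lt hn) hn.le ?_ ?_
  · rw [← Ideal.map_pow]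
    exact map_linearMap_le_restrictScalars_map (m ^ n)
  · rwa [pow_one]

/-- `A` Noetherian local with residue field `k = A/m`, `B ⊇ A` finite,
`M = mB`, and `n0 ≥ 1` with `M^{n0}` contained in the image of `m` in `B`. Then for
every `n ≥ n0`, the length of `M^{n0}/M^n` is at most the length of `m/m^n`;
equivalently `∑_{i=n0}^{n-1} dim_k (M^i/M^{i+1}) ≤ ∑_{i=1}^{n-1} dim_k (m^i/m^{i+1})`. -/
theorem stmt7 (A B : Type*) [CommRing A] [IsNoetherianRing A] [IsLocalRing A]
    [CommRing B] [Algebra A B]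
    (hinj : Function.Injective (algebraMap A B)) [Module.Finite A B]
    (n0 : ℕ) (hn0 : 1 ≤ n0)
    (h : (((maximalIdeal A).map (algebraMap A B)) ^ n0).restrictScalars A ≤
      Submodule.map (Algebra.linearMap A B) (maximalIdeal A : Submodule A A)) :
    ∀ n ≥ n0,
      (∑ i ∈ Finset.Ico n0 n,
          Module.finrank (A ⧸ maximalIdeal A)
            (((((maximalIdeal A).map (algebraMap A B)) ^ i).restrictScalars A) ⧸
              ((maximalIdeal A) • (⊤ : Submodule A
                ((((maximalIdeal A).map (algebraMap A B)) ^ i).restrictScalars A))))) ≤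
      ∑ i ∈ Finset.Ico 1 n,
          Module.finrank (A ⧸ maximalIdeal A)
            ((maximalIdeal A ^ i : Ideal A) ⧸
              ((maximalIdeal A) • (⊤ : Submodule A (maximalIdeal A ^ i : Ideal A)))) :=
  fun n _ ↦ stmt7_general (maximalIdeal A) (maximalIdeal A).fg_of_isNoetherianRing n0 n h
end

section
/- Let A be a commutative Noetherian local ring with maximal ideal m and residue field k = A/m, and let B be a commutative ring containing A as a subring that is finitely generated as an A-module. Write M = mB. Suppose n0 ≥ 1 is such that M^{n0} is contained in the image of m in B, and suppose n1 is such that for all n ≥ n1 the natural map ν_n : m^n/m^{n+1} → M^n/M^{n+1} is injective (i.e., m^n ∩ M^{n+1} = m^{n+1}). Then there exists N such that for all n ≥ N the map ν_n is an isomorphism; explicitly, m^n + M^{n+1} = M^n as A-submodules of B. -/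
open IsLocalRing Submodule

/-!
Write `L` for the image of `A` in `B`, so that the image of `m ^ n` is `m ^ n L` and
`M ^ n = m ^ n B`. Multiplying `m ^ n0 B ⊆ L` by `m ^ n1` gives `m ^ (n0 + n1) B ⊆ m ^ n1 L`, and
iterating `m ^ n L ∩ m ^ (n + 1) B ⊆ m ^ (n + 1) L` from `n = n1` on then gives
`m ^ n B ⊆ m ^ n L` for all `n ≥ n0 + n1`.
-/

theorem inf_le_of_forall_inf_succ_le {α : Type*} [SemilatticeInf α] {F G : ℕ → α}
    (hG : Antitone G) {k : ℕ} (hFG : ∀ n ≥ k, F n ⊓ G (n + 1) ≤ F (n + 1)) {n : ℕ}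
    (hn : k ≤ n) : F k ⊓ G n ≤ F n := by
  induction n, hn using Nat.le_induction with
  | base => exact inf_le_left
  | succ n hn ih =>
    have hFn : F k ⊓ G (n + 1) ≤ F n := (inf_le_inf_left _ (hG n.le_succ)).trans ih
    exact (le_inf hFn inf_le_right).trans (hFG n hn)

theorem antitone_pow_smul {R E : Type*} [Semiring R] [AddCommMonoid E] [Module R E]
    (I : Ideal R) (L : Submodule R E) : Antitone fun n : ℕ ↦ I ^ n • L :=
  fun _ _ hmn ↦ smul_mono_left (Ideal.pow_le_pow_right hmn)

theorem pow_smul_eq_pow_smul_top {R E : Type*} [CommSemiring R] [AddCommMonoid E] [Module R E]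
    {I : Ideal R} {L : Submodule R E} {n₀ n₁ : ℕ}
    (hL : I ^ n₀ • (⊤ : Submodule R E) ≤ L)
    (hinf : ∀ n ≥ n₁, I ^ n • L ⊓ I ^ (n + 1) • (⊤ : Submodule R E) ≤ I ^ (n + 1) • L)
    {n : ℕ} (hn : n₀ + n₁ ≤ n) : I ^ n • L = I ^ n • (⊤ : Submodule R E) := by
  refine le_antisymm (smul_mono_right _ le_top) ?_
  have hle : I ^ n • (⊤ : Submodule R E) ≤ I ^ n₁ • L :=
    calc I ^ n • (⊤ : Submodule R E) ≤ I ^ (n₁ + n₀) • ⊤ :=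
          antitone_pow_smul I ⊤ (by omega)
      _ = I ^ n₁ • I ^ n₀ • ⊤ := by rw [pow_add, mul_smul]
      _ ≤ I ^ n₁ • L := smul_mono_right _ hL
  exact (le_inf hle le_rfl).trans
    (inf_le_of_forall_inf_succ_le (antitone_pow_smul I ⊤) hinf (by omega))

section Algebra

variable {A B : Type*} [CommSemiring A] [CommSemiring B] [Algebra A B]

theorem map_linearMap_eq_smul_range (I : Ideal A) :
    map (Algebra.linearMap A B) I = I • LinearMap.range (Algebra.linearMap A B) := by
  rw [LinearMap.range_eq_map, ← map_smul'', smul_eq_mul, Ideal.mul_top]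

theorem restrictScalars_map_pow_eq_pow_smul_top (I : Ideal A) (n : ℕ) :
    ((I.map (algebraMap A B)) ^ n).restrictScalars A = I ^ n • (⊤ : Submodule A B) := by
  rw [← Ideal.map_pow, Ideal.smul_top_eq_map]

theorem stmt8_general (I : Ideal A) (n₀ n₁ : ℕ)
    (hrange : ((I.map (algebraMap A B)) ^ n₀).restrictScalars A ≤
      LinearMap.range (Algebra.linearMap A B))
    (hinf : ∀ n ≥ n₁,
      map (Algebra.linearMap A B) (I ^ n : Ideal A) ⊓
          ((I.map (algebraMap A B)) ^ (n + 1)).restrictScalars A ≤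
        map (Algebra.linearMap A B) (I ^ (n + 1) : Ideal A))
    {n : ℕ} (hn : n₀ + n₁ ≤ n) :
    map (Algebra.linearMap A B) (I ^ n : Ideal A) =
      ((I.map (algebraMap A B)) ^ n).restrictScalars A := by
  simp only [map_linearMap_eq_smul_range, restrictScalars_map_pow_eq_pow_smul_top]
    at hrange hinf ⊢
  exact pow_smul_eq_pow_smul_top hrange hinf hn

end Algebra

/-- `A` Noetherian local, `B ⊇ A` finite, `M = mB`, `n0 ≥ 1` with
`M^{n0}` contained in the image of `m` in `B`, and `n1` such that `ν_n` is
injective (`m^n ∩ M^{n+1} = m^{n+1}`) for all `n ≥ n1`. Then there is `N` such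
that for all `n ≥ N` the map `ν_n` is an isomorphism; explicitly
`m^n ∩ M^{n+1} = m^{n+1}` and `m^n + M^{n+1} = M^n` as `A`-submodules of `B`. -/
theorem stmt8 (A B : Type*) [CommRing A] [IsNoetherianRing A] [IsLocalRing A]
    [CommRing B] [Algebra A B]
    (hinj : Function.Injective (algebraMap A B)) [Module.Finite A B]
    (n0 : ℕ) (hn0 : 1 ≤ n0)
    (h : (((maximalIdeal A).map (algebraMap A B)) ^ n0).restrictScalars A ≤
      Submodule.map (Algebra.linearMap A B) (maximalIdeal A : Submodule A A))
    (n1 : ℕ)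
    (hinjn : ∀ n ≥ n1,
      Submodule.map (Algebra.linearMap A B) (maximalIdeal A ^ n : Ideal A) ⊓
          ((((maximalIdeal A).map (algebraMap A B)) ^ (n + 1)).restrictScalars A) =
        Submodule.map (Algebra.linearMap A B) (maximalIdeal A ^ (n + 1) : Ideal A)) :
    ∃ N : ℕ, ∀ n ≥ N,
      Submodule.map (Algebra.linearMap A B) (maximalIdeal A ^ n : Ideal A) ⊓
          ((((maximalIdeal A).map (algebraMap A B)) ^ (n + 1)).restrictScalars A) =
        Submodule.map (Algebra.linearMap A B) (maximalIdeal A ^ (n + 1) : Ideal A) ∧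
      Submodule.map (Algebra.linearMap A B) (maximalIdeal A ^ n : Ideal A) ⊔
          ((((maximalIdeal A).map (algebraMap A B)) ^ (n + 1)).restrictScalars A) =
        (((maximalIdeal A).map (algebraMap A B)) ^ n).restrictScalars A := by
  refine ⟨n0 + n1, fun n hn ↦ ⟨hinjn n (by omega), ?_⟩⟩
  rw [stmt8_general _ n0 n1 (h.trans LinearMap.map_le_range) (fun k hk ↦ (hinjn k hk).le) hn]
  exact sup_eq_left.2 (Ideal.pow_le_pow_right n.le_succ)
end
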